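/- For every factor α of ω with |α| ≥ 3, one has φ(α) = φ(α^{-1}), where α^{-1} is the reversal of α (which is again a factor of ω). -/

import Mathlib

/-- One-sided Thue–Morse sequence: parity of the binary digit sum. -/
def tm (n : ℕ) : ℕ := (Nat.digits 2 n).sum % 2

/-- Two-sided Thue–Morse sequence `ω : ℤ → {0,1}`. -/
def tmZ (n : ℤ) : ℕ := if 0 ≤ n then tm n.toNat else tm (-n - 1).toNat

/-- The block `ω_[m, m+k-1]` of the two-sided Thue–Morse sequence. -/
def tmBlock (m : ℤ) (k : ℕ) : List ℕ := (List.range k).map fun j => tmZ (m + j)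

/-- A (nonempty) word is a factor of the two-sided Thue–Morse sequence. -/
def IsFactor (α : List ℕ) : Prop := α ≠ [] ∧ ∃ m : ℤ, α = tmBlock m α.length

/-- The words `i⁽ⁿ⁾`: `blk i 0 = [i]`, `blk i (n+1) = blk i n ++ blk (1-i) n`. -/
def blk : ℕ → ℕ → List ℕ
  | i, 0 => [i]
  | i, n + 1 => blk i n ++ blk (1 - i) n

/-! Call a word left (right) special if both letters extend it to a factor on the left (right). The
recursion makes `φ α` depend only on the number of left special proper suffixes of `α` of length at
least three; reversal turns these into right special prefixes, so it suffices that removing last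
letters yields the same count as removing first letters. For a factor `jβi` this is the identity
`[β right special] + [βi left special] = [β left special] + [jβ right special]`, which holds because
for `|β| ≥ 2` the set of pairs `(j, i)` such that `jβi` is a factor never has exactly three
elements. If it had three and `|β| ≥ 3`, then `β` would be a concatenation of blocks `01` and `10`,
hence the image of a word half as long with the same property; this descent ends at the words `01`
and `10`, for which all four pairs occur. -/

theorem tm_two_mul (n : ℕ) : tm (2 * n) = tm n := by
  rcases n.eq_zero_or_pos with rfl | hn
  · rfl
  · simp [tm, Nat.digits_def' one_lt_two (show 0 < 2 * n by omega)]

theorem tm_two_mul_add_one (n : ℕ) : tm (2 * n + 1) = 1 - tm n := by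
  have hmod : (2 * n + 1) % 2 = 1 := by omega
  have hdiv : (2 * n + 1) / 2 = n := by omega
  rw [tm, tm, Nat.digits_def' one_lt_two (by omega), hmod, hdiv, List.sum_cons]
  omega

theorem tm_lt_two (n : ℕ) : tm n < 2 := Nat.mod_lt _ two_pos

theorem tm_eq_tm_div_two_add_mod (n : ℕ) : tm n = (tm (n / 2) + n) % 2 := by
  have hlt := tm_lt_two (n / 2)
  rcases Nat.even_or_odd' n with ⟨a, rfl | rfl⟩
  · rw [tm_two_mul, Nat.mul_div_cancel_left a two_pos] at *
    omega
  · rw [tm_two_mul_add_one, show (2 * a + 1) / 2 = a by omega] at *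
    omega

theorem tm_two_pow_mul_add (k a : ℕ) {b : ℕ} (hb : b < 2 ^ k) :
    tm (2 ^ k * a + b) = (tm a + tm b) % 2 := by
  induction k generalizing b with
  | zero =>
    obtain rfl : b = 0 := by simpa using hb
    simp [tm]
  | succ k ih =>
    have hdiv : (2 ^ (k + 1) * a + b) / 2 = 2 ^ k * a + b / 2 := by
      rw [pow_succ', mul_assoc]
      omega
    have hmod : (2 ^ (k + 1) * a + b) % 2 = b % 2 := by
      rw [pow_succ', mul_assoc]
      omega
    rw [tm_eq_tm_div_two_add_mod, hdiv, ih (by omega), tm_eq_tm_div_two_add_mod b]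
    omega

theorem tm_of_add_add_one_eq_two_pow {k a b : ℕ} (h : a + b + 1 = 2 ^ k) :
    tm a = (tm b + k) % 2 := by
  induction k generalizing a b with
  | zero =>
    obtain ⟨rfl, rfl⟩ : a = 0 ∧ b = 0 := by simpa using h
    simp [tm]
  | succ k ih =>
    rw [tm_eq_tm_div_two_add_mod a, tm_eq_tm_div_two_add_mod b,
      ih (a := a / 2) (b := b / 2) (by omega)]
    omega

theorem tmZ_natCast (n : ℕ) : tmZ n = tm n := by simp [tmZ]

theorem tmZ_neg_one_sub (n : ℤ) : tmZ (-1 - n) = tmZ n := by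
  unfold tmZ
  split_ifs
  · omega
  all_goals congr 1; omega

/- In base four, the shift puts the digit string of `x ≥ 0` behind `6` and that of `4 ^ n + x`, for
`x < 0`, behind `5`. Both have even binary digit sum, and complementing an even number of binary
digits preserves parity. -/
theorem tmZ_eq_tm_add_six_mul_four_pow {n : ℕ} {x : ℤ} (hx : |x| < 4 ^ n) :
    tmZ x = tm (x + 6 * 4 ^ n).toNat := by
  have hpow : (4 : ℤ) ^ n = ((2 ^ (2 * n) : ℕ) : ℤ) := by
    rw [pow_mul]
    norm_num
  have h₅ : tm 5 = 0 := by norm_num [tm]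
  have h₆ : tm 6 = 0 := by norm_num [tm]
  rw [hpow] at hx ⊢
  obtain ⟨hneg, hpos⟩ := abs_lt.mp hx
  rcases le_or_gt 0 x with h0 | h0
  · lift x to ℕ using h0
    have hidx : ((x : ℤ) + 6 * (2 ^ (2 * n) : ℕ)).toNat = 2 ^ (2 * n) * 6 + x := by omega
    have hlt := tm_lt_two x
    rw [tmZ_natCast, hidx, tm_two_pow_mul_add _ _ (by omega), h₆]
    omega
  · obtain ⟨a, rfl⟩ : ∃ a : ℕ, x = -1 - a := ⟨(-1 - x).toNat, by omega⟩
    obtain ⟨b, hb⟩ : ∃ b, b + a + 1 = 2 ^ (2 * n) := ⟨2 ^ (2 * n) - (a + 1), by omega⟩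
    have hidx : (-1 - (a : ℤ) + 6 * (2 ^ (2 * n) : ℕ)).toNat = 2 ^ (2 * n) * 5 + b := by omega
    have hlt := tm_lt_two a
    rw [tmZ_neg_one_sub, tmZ_natCast, hidx, tm_two_pow_mul_add _ _ (by omega), h₅,
      tm_of_add_add_one_eq_two_pow hb]
    omega

/-- The factor of length `k` of the one-sided Thue–Morse sequence that starts at position `m`. -/
def tmWord (m k : ℕ) : List ℕ := (List.range k).map fun t => tm (m + t)

@[simp]
theorem length_tmWord (m k : ℕ) : (tmWord m k).length = k := by simp [tmWord]

theorem tmWord_eq_tmWord_iff {m p k : ℕ} :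
    tmWord m k = tmWord p k ↔ ∀ t < k, tm (m + t) = tm (p + t) := by
  simp [tmWord]

theorem tmWord_succ (m k : ℕ) : tmWord m (k + 1) = tm m :: tmWord (m + 1) k := by
  simp [tmWord, List.range_succ_eq_map, add_assoc, add_comm 1]

theorem tmWord_succ' (m k : ℕ) : tmWord m (k + 1) = tmWord m k ++ [tm (m + k)] := by
  simp [tmWord, List.range_succ]

theorem tmWord_two_mul_eq_iff {m p k : ℕ} :
    tmWord (2 * m) (2 * k) = tmWord (2 * p) (2 * k) ↔ tmWord m k = tmWord p k := by
  simp only [tmWord_eq_tmWord_iff]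
  constructor <;> intro h t ht
  · simpa only [← mul_add, tm_two_mul] using h (2 * t) (by omega)
  · have hdiv (a : ℕ) : (2 * a + t) / 2 = a + t / 2 := by omega
    rw [tm_eq_tm_div_two_add_mod, tm_eq_tm_div_two_add_mod (2 * p + t), hdiv, hdiv,
      h (t / 2) (by omega)]
    omega

theorem mod_two_eq_one_of_tm_eq_succ {n : ℕ} (h : tm n = tm (n + 1)) : n % 2 = 1 := by
  by_contra hn
  obtain ⟨a, rfl⟩ : ∃ a, n = 2 * a := ⟨n / 2, by omega⟩
  rw [tm_two_mul, tm_two_mul_add_one] at h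
  omega

theorem tm_succ_ne_tm_add_two {n : ℕ} (h : tm n = tm (n + 1)) : tm (n + 1) ≠ tm (n + 2) := by
  intro h'
  have := mod_two_eq_one_of_tm_eq_succ h
  have := mod_two_eq_one_of_tm_eq_succ h'
  omega

theorem tm_add_three_ne_tm_add_four {n : ℕ} (h : tm n = tm (n + 1)) : tm (n + 3) ≠ tm (n + 4) := by
  intro h'
  have := mod_two_eq_one_of_tm_eq_succ h
  have := mod_two_eq_one_of_tm_eq_succ h'
  omega

theorem tm_add_two_ne_tm_add_four {n : ℕ} (h : tm n = tm (n + 2)) : tm (n + 2) ≠ tm (n + 4) := by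
  intro h'
  have h₂ : (n + 2) / 2 = n / 2 + 1 := by omega
  have h₄ : (n + 4) / 2 = n / 2 + 2 := by omega
  have := tm_lt_two (n / 2)
  have := tm_lt_two (n / 2 + 1)
  have := tm_lt_two (n / 2 + 2)
  rw [tm_eq_tm_div_two_add_mod n, tm_eq_tm_div_two_add_mod (n + 2), h₂] at h
  rw [tm_eq_tm_div_two_add_mod (n + 2), tm_eq_tm_div_two_add_mod (n + 4), h₂, h₄] at h'
  exact tm_succ_ne_tm_add_two (n := n / 2) (by omega) (by omega)

theorem tm_ne_tm_add_four {n : ℕ} (h₁ : tm (n + 1) ≠ tm (n + 2)) (h₂ : tm (n + 2) ≠ tm (n + 3)) :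
    tm n ≠ tm (n + 4) := by
  intro h
  have := tm_lt_two n
  have := tm_lt_two (n + 1)
  have := tm_lt_two (n + 2)
  have := tm_lt_two (n + 3)
  by_cases h₀ : tm n = tm (n + 1)
  · exact tm_add_three_ne_tm_add_four h₀ (by omega)
  · exact tm_add_two_ne_tm_add_four (n := n) (by omega) (by omega)

theorem tm_eq_iff_succ_of_even {x y : ℕ} (hx : x % 2 = 0) (hy : y % 2 = 0) :
    tm x = tm y ↔ tm (x + 1) = tm (y + 1) := by
  obtain ⟨a, rfl⟩ : ∃ a, x = 2 * a := ⟨x / 2, by omega⟩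
  obtain ⟨b, rfl⟩ : ∃ b, y = 2 * b := ⟨y / 2, by omega⟩
  have := tm_lt_two a
  have := tm_lt_two b
  rw [tm_two_mul, tm_two_mul, tm_two_mul_add_one, tm_two_mul_add_one]
  omega

theorem mod_two_eq_of_tmWord_eq {m p k t : ℕ} (h : tmWord m k = tmWord p k) (ht : t + 1 < k)
    (hsq : tm (m + t) = tm (m + t + 1)) : m % 2 = p % 2 := by
  rw [tmWord_eq_tmWord_iff] at h
  have hsq' : tm (p + t) = tm (p + t + 1) := by
    rw [← h t (by omega), hsq]
    exact h (t + 1) ht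
  have := mod_two_eq_one_of_tm_eq_succ hsq
  have := mod_two_eq_one_of_tm_eq_succ hsq'
  omega

theorem exists_tmWord_four_eq {a b c d : ℕ} (ha : a < 2) (hb : b < 2) (hc : c < 2) (hd : d < 2)
    (hbc : b ≠ c) : ∃ r, tmWord r 4 = [a, b, c, d] := by
  have hc' : c = 1 - b := by omega
  subst hc'
  interval_cases a <;> interval_cases b <;> interval_cases d
  · exact ⟨9, by norm_num [tmWord, List.range_succ, tm]⟩
  · exact ⟨5, by norm_num [tmWord, List.range_succ, tm]⟩
  · exact ⟨3, by norm_num [tmWord, List.range_succ, tm]⟩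
  · exact ⟨10, by norm_num [tmWord, List.range_succ, tm]⟩
  · exact ⟨2, by norm_num [tmWord, List.range_succ, tm]⟩
  · exact ⟨11, by norm_num [tmWord, List.range_succ, tm]⟩
  · exact ⟨7, by norm_num [tmWord, List.range_succ, tm]⟩
  · exact ⟨1, by norm_num [tmWord, List.range_succ, tm]⟩

/-- The windows of length `k + 2` at the positions `m`, `p`, `q` are `jβi`, `jβi'`, `j'βi` with
`j ≠ j'` and `i ≠ i'`: three of the four two-sided extensions of a word `β` of length `k`. -/
structure ThreeCorners (k m p q : ℕ) : Prop where
  word_p : tmWord (m + 1) k = tmWord (p + 1) k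
  word_q : tmWord (m + 1) k = tmWord (q + 1) k
  left_p : tm m = tm p
  left_q : tm m ≠ tm q
  right_p : tm (m + 1 + k) ≠ tm (p + 1 + k)
  right_q : tm (m + 1 + k) = tm (q + 1 + k)

namespace ThreeCorners

variable {k m p q : ℕ}

theorem first_ne_second (h : ThreeCorners k m p q) (hk : 2 ≤ k) : tm (m + 1) ≠ tm (m + 2) := by
  intro heq
  have hq₁ : tm (m + 1) = tm (q + 1) := tmWord_eq_tmWord_iff.mp h.word_q 0 (by omega)
  have hq₂ : tm (m + 2) = tm (q + 2) := tmWord_eq_tmWord_iff.mp h.word_q 1 (by omega)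
  have hm : tm m ≠ tm (m + 1) := fun e => tm_succ_ne_tm_add_two e heq
  have hq : tm q ≠ tm (q + 1) := fun e => tm_succ_ne_tm_add_two e (by omega)
  have := tm_lt_two m
  have := tm_lt_two q
  have := tm_lt_two (m + 1)
  have := h.left_q
  omega

theorem exists_square_letter (h : ThreeCorners k m p q) (hk : 3 ≤ k) :
    ∃ t, t + 1 < k ∧ tm (m + 1 + t) = tm (m + 1 + t + 1) := by
  by_contra! alternating
  have hword_p := tmWord_eq_tmWord_iff.mp h.word_p
  have hword_q := tmWord_eq_tmWord_iff.mp h.word_q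
  have hm₁₂ : tm (m + 1) ≠ tm (m + 2) := alternating 0 (by omega)
  have hm₂₃ : tm (m + 2) ≠ tm (m + 3) := alternating 1 (by omega)
  have hp₁ : tm (m + 1) = tm (p + 1) := hword_p 0 (by omega)
  have hp₂ : tm (m + 2) = tm (p + 2) := hword_p 1 (by omega)
  have hp₃ : tm (m + 3) = tm (p + 3) := hword_p 2 (by omega)
  obtain rfl | hk4 : k = 3 ∨ 4 ≤ k := by omega
  · have hm := tm_ne_tm_add_four hm₁₂ hm₂₃
    have hp := tm_ne_tm_add_four (n := p) (by omega) (by omega)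
    have hright : tm (m + 4) ≠ tm (p + 4) := h.right_p
    have := tm_lt_two m
    have := tm_lt_two (m + 4)
    have := tm_lt_two (p + 4)
    have := h.left_p
    omega
  · have hm₃₄ : tm (m + 3) ≠ tm (m + 4) := alternating 2 (by omega)
    have hq₂ : tm (m + 2) = tm (q + 2) := hword_q 1 (by omega)
    have hq₄ : tm (m + 4) = tm (q + 4) := hword_q 3 (by omega)
    have := tm_lt_two m
    have := tm_lt_two q
    have := tm_lt_two (m + 2)
    have := tm_lt_two (m + 3)
    have := tm_lt_two (m + 4)
    have hm : tm m ≠ tm (m + 2) := fun e => tm_add_two_ne_tm_add_four e (by omega)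
    have hq : tm q ≠ tm (q + 2) := fun e => tm_add_two_ne_tm_add_four e (by omega)
    have := h.left_q
    omega

theorem odd_positions_and_even_length (h : ThreeCorners k m p q) (hk : 3 ≤ k) :
    m % 2 = 1 ∧ p % 2 = 1 ∧ q % 2 = 1 ∧ k % 2 = 0 := by
  obtain ⟨t, ht, hsq⟩ := h.exists_square_letter hk
  have hp := mod_two_eq_of_tmWord_eq h.word_p ht hsq
  have hq := mod_two_eq_of_tmWord_eq h.word_q ht hsq
  have first_eq : tm (m + 1) = tm (q + 1) := tmWord_eq_tmWord_iff.mp h.word_q 0 (by omega)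
  have last_eq : tm (m + k) = tm (p + k) := by
    have := tmWord_eq_tmWord_iff.mp h.word_p (k - 1) (by omega)
    rwa [show m + 1 + (k - 1) = m + k by omega, show p + 1 + (k - 1) = p + k by omega] at this
  have hm_odd : m % 2 = 1 := by
    by_contra hm
    exact h.left_q ((tm_eq_iff_succ_of_even (by omega) (by omega)).mpr first_eq)
  have hk_even : k % 2 = 0 := by
    by_contra hk
    apply h.right_p
    rw [add_right_comm m, add_right_comm p]
    exact (tm_eq_iff_succ_of_even (by omega) (by omega)).mp last_eq
  omega

theorem desubstitute (h : ThreeCorners (2 * k) (2 * m + 1) (2 * p + 1) (2 * q + 1)) :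
    ThreeCorners k m p q := by
  obtain ⟨word_p, word_q, left_p, left_q, right_p, right_q⟩ := h
  have hstart (a : ℕ) : 2 * a + 1 + 1 = 2 * (a + 1) := by ring
  simp only [hstart, tmWord_two_mul_eq_iff] at word_p word_q
  simp only [hstart, ← mul_add, tm_two_mul] at right_p right_q
  simp only [tm_two_mul_add_one] at left_p left_q
  have := tm_lt_two m
  have := tm_lt_two p
  exact ⟨word_p, word_q, by omega, by omega, right_p, right_q⟩

theorem exists_fourth (h : ThreeCorners k m p q) (hk : 2 ≤ k) :
    ∃ r, tm r = tm q ∧ tmWord (r + 1) k = tmWord (m + 1) k ∧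
      tm (r + 1 + k) = tm (p + 1 + k) := by
  induction k using Nat.strong_induction_on generalizing m p q with
  | _ k ih =>
  obtain rfl | hk3 : k = 2 ∨ 3 ≤ k := by omega
  · obtain ⟨r, hr⟩ := exists_tmWord_four_eq (tm_lt_two q) (tm_lt_two (m + 1))
      (tm_lt_two (m + 2)) (tm_lt_two (p + 3)) (h.first_ne_second hk)
    refine ⟨r, ?_⟩
    simpa [tmWord, List.range_succ, add_assoc, and_assoc] using hr
  · obtain ⟨hm, hp, hq, hk_even⟩ := h.odd_positions_and_even_length hk3
    obtain ⟨k, rfl⟩ : ∃ l, k = 2 * l := ⟨k / 2, by omega⟩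
    obtain ⟨m, rfl⟩ : ∃ a, m = 2 * a + 1 := ⟨m / 2, by omega⟩
    obtain ⟨p, rfl⟩ : ∃ a, p = 2 * a + 1 := ⟨p / 2, by omega⟩
    obtain ⟨q, rfl⟩ : ∃ a, q = 2 * a + 1 := ⟨q / 2, by omega⟩
    obtain ⟨r, left_r, word_r, right_r⟩ := ih k (by omega) h.desubstitute (by omega)
    have hstart (a : ℕ) : 2 * a + 1 + 1 = 2 * (a + 1) := by ring
    refine ⟨2 * r + 1, ?_, ?_, ?_⟩
    · rw [tm_two_mul_add_one, tm_two_mul_add_one, left_r]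
    · rwa [hstart, hstart, tmWord_two_mul_eq_iff]
    · rwa [hstart, hstart, ← mul_add, ← mul_add, tm_two_mul, tm_two_mul]

end ThreeCorners

theorem tmBlock_eq_map (m : ℤ) (k : ℕ) :
    tmBlock m k = (List.range k).map fun t : ℕ => tmZ (m + t) := by
  simp [tmBlock, List.map_eq_flatMap, List.flatMap_assoc]

theorem tmBlock_succ (m : ℤ) (k : ℕ) : tmBlock m (k + 1) = tmZ m :: tmBlock (m + 1) k := by
  simp [tmBlock_eq_map, List.range_succ_eq_map, add_assoc, add_comm (1 : ℤ)]

theorem reverse_tmBlock (m : ℤ) (k : ℕ) : (tmBlock m k).reverse = tmBlock (-m - k) k := by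
  refine List.ext_getElem (by simp [tmBlock_eq_map]) fun t _ ht => ?_
  simp only [tmBlock_eq_map, List.length_map, List.length_range] at ht
  simp only [tmBlock_eq_map, List.getElem_reverse, List.getElem_map, List.getElem_range,
    List.length_map, List.length_range]
  rw [← tmZ_neg_one_sub]
  congr 1
  omega

theorem exists_tmBlock_eq_tmWord (m : ℤ) (k : ℕ) : ∃ a, tmBlock m k = tmWord a k := by
  obtain ⟨n, hn⟩ := pow_unbounded_of_one_lt (|m| + k) (show (1 : ℤ) < 4 by norm_num)
  refine ⟨(m + 6 * 4 ^ n).toNat, ?_⟩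
  rw [tmBlock_eq_map, tmWord]
  refine List.map_congr_left fun t ht => ?_
  have ht := List.mem_range.mp ht
  have := le_abs_self m
  have := neg_abs_le m
  rw [tmZ_eq_tm_add_six_mul_four_pow (n := n) (abs_lt.mpr ⟨by omega, by omega⟩)]
  congr 1
  omega

theorem tmBlock_natCast (m k : ℕ) : tmBlock m k = tmWord m k := by
  rw [tmBlock_eq_map, tmWord]
  refine List.map_congr_left fun t _ => ?_
  rw [← Nat.cast_add, tmZ_natCast]

theorem isFactor_iff_exists_tmWord {α : List ℕ} :
    IsFactor α ↔ α ≠ [] ∧ ∃ m, tmWord m α.length = α := by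
  refine and_congr_right fun _ => ⟨?_, ?_⟩
  · rintro ⟨m, hm⟩
    obtain ⟨a, ha⟩ := exists_tmBlock_eq_tmWord m α.length
    exact ⟨a, by rw [← ha, ← hm]⟩
  · rintro ⟨m, hm⟩
    exact ⟨m, by rw [tmBlock_natCast, hm]⟩

theorem isFactor_tmWord (m : ℕ) {k : ℕ} (hk : k ≠ 0) : IsFactor (tmWord m k) :=
  isFactor_iff_exists_tmWord.mpr ⟨by simpa [← List.length_eq_zero_iff], m, by rw [length_tmWord]⟩

theorem isFactor_reverse {α : List ℕ} : IsFactor α.reverse ↔ IsFactor α := by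
  have reverse {α : List ℕ} (h : IsFactor α) : IsFactor α.reverse := by
    obtain ⟨hne, m, hm⟩ := h
    refine ⟨by simpa using hne, -m - α.length, ?_⟩
    rw [List.length_reverse, ← reverse_tmBlock, ← hm]
  exact ⟨fun h => by simpa using reverse h, reverse⟩

theorem isFactor_append_singleton {i : ℕ} {α : List ℕ} :
    IsFactor (α ++ [i]) ↔ IsFactor (i :: α.reverse) := by
  rw [← isFactor_reverse]
  simp

theorem isFactor_cons_append_iff {j i : ℕ} {β : List ℕ} :
    IsFactor (j :: (β ++ [i])) ↔
      ∃ m, tm m = j ∧ tmWord (m + 1) β.length = β ∧ tm (m + 1 + β.length) = i := by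
  have split (m : ℕ) : tmWord m (β.length + 1 + 1) =
      tm m :: (tmWord (m + 1) β.length ++ [tm (m + 1 + β.length)]) := by
    rw [tmWord_succ, tmWord_succ']
  simp [isFactor_iff_exists_tmWord, split, List.append_singleton_inj]

namespace IsFactor

variable {j i j' i' : ℕ} {α β : List ℕ}

theorem of_cons (h : IsFactor (i :: α)) (hα : α ≠ []) : IsFactor α := by
  obtain ⟨-, m, hm⟩ := h
  rw [List.length_cons, tmBlock_succ, List.cons.injEq] at hm
  exact ⟨hα, m + 1, hm.2⟩

theorem of_append_singleton (h : IsFactor (α ++ [i])) (hα : α ≠ []) : IsFactor α :=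
  isFactor_reverse.mp ((isFactor_append_singleton.mp h).of_cons (by simpa using hα))

theorem lt_two (h : IsFactor (i :: α)) : i < 2 := by
  obtain ⟨-, m, hm⟩ := isFactor_iff_exists_tmWord.mp h
  rw [List.length_cons, tmWord_succ, List.cons.injEq] at hm
  exact hm.1 ▸ tm_lt_two m

theorem exists_append_singleton (h : IsFactor α) : ∃ i < 2, IsFactor (α ++ [i]) := by
  obtain ⟨-, m, hm⟩ := isFactor_iff_exists_tmWord.mp h
  refine ⟨tm (m + α.length), tm_lt_two _, ?_⟩
  nth_rw 1 [← hm]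
  rw [← tmWord_succ']
  exact isFactor_tmWord m (by omega)

theorem iff_append_or_append (hα : α ≠ []) (hi : i < 2) :
    IsFactor α ↔ IsFactor (α ++ [i]) ∨ IsFactor (α ++ [1 - i]) := by
  refine ⟨fun h => ?_, Or.rec (of_append_singleton · hα) (of_append_singleton · hα)⟩
  obtain ⟨s, hs, hsα⟩ := h.exists_append_singleton
  obtain rfl | rfl : s = i ∨ s = 1 - i := by omega
  exacts [.inl hsα, .inr hsα]

theorem iff_cons_or_cons (hα : α ≠ []) (hi : i < 2) :
    IsFactor α ↔ IsFactor (i :: α) ∨ IsFactor ((1 - i) :: α) := by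
  rw [← isFactor_reverse, iff_append_or_append (by simpa using hα) hi]
  simp only [isFactor_append_singleton, List.reverse_reverse]

theorem fourth_corner (hβ : 2 ≤ β.length) (h : IsFactor (j :: (β ++ [i])))
    (hp : IsFactor (j :: (β ++ [i']))) (hq : IsFactor (j' :: (β ++ [i])))
    (hj : j ≠ j') (hi : i ≠ i') : IsFactor (j' :: (β ++ [i'])) := by
  rw [isFactor_cons_append_iff] at *
  obtain ⟨m, left_m, word_m, right_m⟩ := h
  obtain ⟨p, left_p, word_p, right_p⟩ := hp
  obtain ⟨q, left_q, word_q, right_q⟩ := hq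
  have corners : ThreeCorners β.length m p q :=
    ⟨word_m.trans word_p.symm, word_m.trans word_q.symm, by omega, by omega, by omega, by omega⟩
  obtain ⟨r, left_r, word_r, right_r⟩ := corners.exists_fourth hβ
  exact ⟨r, left_r.trans left_q, word_r.trans word_m, right_r.trans right_p⟩

end IsFactor

/-- A word is left special if both letters extend it to a factor on the left. -/
def LeftSpecial (β : List ℕ) : Prop := IsFactor (0 :: β) ∧ IsFactor (1 :: β)

/-- A word is right special if both letters extend it to a factor on the right. -/
def RightSpecial (β : List ℕ) : Prop := IsFactor (β ++ [0]) ∧ IsFactor (β ++ [1])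

theorem leftSpecial_reverse {β : List ℕ} : LeftSpecial β.reverse ↔ RightSpecial β := by
  simp only [RightSpecial, LeftSpecial, isFactor_append_singleton]

namespace IsFactor

variable {j i : ℕ} {β : List ℕ}

theorem leftSpecial_iff (h : IsFactor (j :: β)) :
    LeftSpecial β ↔ IsFactor ((1 - j) :: β) := by
  have hj := h.lt_two
  interval_cases j <;> simp [LeftSpecial, h]

theorem rightSpecial_iff (h : IsFactor (β ++ [i])) :
    RightSpecial β ↔ IsFactor (β ++ [1 - i]) := by
  rw [← leftSpecial_reverse, isFactor_append_singleton,
    (isFactor_append_singleton.mp h).leftSpecial_iff]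

theorem leftSpecial_iff_rightSpecial_of_length_eq_two (h : IsFactor β) (hβ : β.length = 2) :
    LeftSpecial β ↔ RightSpecial β := by
  obtain ⟨a, b, rfl⟩ := List.length_eq_two.mp hβ
  have ha : a < 2 := h.lt_two
  have hb : b < 2 := (h.of_cons (by simp)).lt_two
  by_cases hab : a = b
  · rw [← leftSpecial_reverse, hab]
    rfl
  · have hfactor {x y : ℕ} (hx : x < 2) (hy : y < 2) : IsFactor [x, a, b, y] := by
      obtain ⟨r, hr⟩ := exists_tmWord_four_eq hx ha hb hy hab
      exact hr ▸ isFactor_tmWord r (by omega)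
    have hleft {x : ℕ} (hx : x < 2) : IsFactor [x, a, b] :=
      (hfactor hx (y := 0) (by omega)).of_append_singleton (α := [x, a, b]) (by simp)
    have hright {y : ℕ} (hy : y < 2) : IsFactor [a, b, y] :=
      (hfactor (x := 0) (by omega) hy).of_cons (by simp)
    exact iff_of_true ⟨hleft (by omega), hleft (by omega)⟩ ⟨hright (by omega), hright (by omega)⟩

open Classical in
theorem special_exchange (h : IsFactor (j :: (β ++ [i]))) (hβ : 2 ≤ β.length) :
    (if RightSpecial β then 1 else 0) + (if LeftSpecial (β ++ [i]) then 1 else 0) =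
      (if LeftSpecial β then 1 else 0) + (if RightSpecial (j :: β) then 1 else 0) := by
  have hβi : IsFactor (β ++ [i]) := h.of_cons (by simp)
  have hjβ : IsFactor (j :: β) := of_append_singleton (α := j :: β) h (by simp)
  have hj := h.lt_two
  have hi := (isFactor_append_singleton.mp hβi).lt_two
  have hleft := iff_append_or_append (α := (1 - j) :: β) (by simp) hi
  have hright := iff_cons_or_cons (α := β ++ [1 - i]) (by simp) hj
  have right_of_left (hleft : IsFactor ((1 - j) :: (β ++ [i])))
      (hboth : IsFactor ((1 - j) :: (β ++ [1 - i]))) : IsFactor (j :: (β ++ [1 - i])) :=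
    hleft.fourth_corner hβ hboth h (by omega) (by omega)
  have left_of_right (hright : IsFactor (j :: (β ++ [1 - i])))
      (hboth : IsFactor ((1 - j) :: (β ++ [1 - i]))) : IsFactor ((1 - j) :: (β ++ [i])) :=
    hright.fourth_corner hβ h hboth (by omega) (by omega)
  rw [hβi.rightSpecial_iff, h.leftSpecial_iff, hjβ.leftSpecial_iff,
    rightSpecial_iff (β := j :: β) h, List.cons_append, hleft, hright]
  grind

end IsFactor

open Classical in
/-- The number of left special words of length at least three among the proper suffixes of `α`:
the number of times the recursion halves `φ α`. -/
noncomputable def branchCount : List ℕ → ℕ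
  | [] => 0
  | _ :: α => branchCount α + if 3 ≤ α.length ∧ LeftSpecial α then 1 else 0

theorem branchCount_eq_zero {α : List ℕ} (hα : α.length ≤ 3) : branchCount α = 0 := by
  induction α with
  | nil => rfl
  | cons i α ih =>
    rw [List.length_cons] at hα
    rw [branchCount, ih (by omega), if_neg (by omega)]

open Classical in
theorem branchCount_append_singleton {i : ℕ} {α : List ℕ} (h : IsFactor (α ++ [i]))
    (hα : 3 ≤ α.length) :
    branchCount (α ++ [i]) = branchCount α + if RightSpecial α then 1 else 0 := by
  induction α with
  | nil => simp at hα
  | cons j β ih =>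
    rw [List.length_cons] at hα
    have hβi : IsFactor (β ++ [i]) := h.of_cons (by simp)
    have exchange := IsFactor.special_exchange h (by omega)
    have hlen : 3 ≤ (β ++ [i]).length := by simpa using hα
    rw [List.cons_append, branchCount, branchCount]
    simp only [hlen, true_and]
    by_cases hβ : 3 ≤ β.length
    · rw [ih hβi hβ]
      simp only [hβ, true_and]
      omega
    · have hβ₂ : β.length = 2 := by omega
      have hβf : IsFactor β := hβi.of_append_singleton (by rintro rfl; simp at hβ₂)
      rw [hβf.leftSpecial_iff_rightSpecial_of_length_eq_two hβ₂] at exchange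
      rw [branchCount_eq_zero (by simp [hβ₂]), branchCount_eq_zero (by omega)]
      simp only [hβ, false_and, if_false]
      omega

open Classical in
theorem branchCount_reverse {α : List ℕ} (h : IsFactor α) :
    branchCount α.reverse = branchCount α := by
  induction α with
  | nil => rfl
  | cons i α ih =>
    by_cases hα : 3 ≤ α.length
    · have hrev : IsFactor (α.reverse ++ [i]) := by simpa using isFactor_reverse.mpr h
      rw [List.reverse_cons, branchCount_append_singleton hrev (by simpa using hα),
        ih (h.of_cons (by rintro rfl; simp at hα)), branchCount]
      simp only [← leftSpecial_reverse, List.reverse_reverse, hα, true_and]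
    · have hlen : (i :: α).length ≤ 3 := by
        rw [List.length_cons]
        omega
      rw [branchCount_eq_zero hlen, branchCount_eq_zero (by rwa [List.length_reverse])]

/-- The recursion defining `φ`, with an arbitrary initial value `c` in place of `1 / 6` and an
arbitrary self-map `f` in place of halving. -/
structure BranchRecursion {X : Type*} (c : X) (f : X → X) (φ : List ℕ → X) : Prop where
  length_three : ∀ α : List ℕ, IsFactor α → α.length = 3 → φ α = c
  not_branching : ∀ (i : ℕ) (α : List ℕ), IsFactor (i :: α) → 3 ≤ α.length →
    ¬ IsFactor ((1 - i) :: α) → φ (i :: α) = φ α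
  branching : ∀ (i : ℕ) (α : List ℕ), IsFactor (i :: α) → 3 ≤ α.length →
    IsFactor ((1 - i) :: α) → φ (i :: α) = f (φ α)

theorem BranchRecursion.eq_iterate_branchCount {X : Type*} {c : X} {f : X → X} {φ : List ℕ → X}
    (hφ : BranchRecursion c f φ) {α : List ℕ} (h : IsFactor α) (hα : 3 ≤ α.length) :
    φ α = f^[branchCount α] c := by
  induction α with
  | nil => simp at hα
  | cons i α ih =>
    obtain hα₃ | hα₃ : (i :: α).length = 3 ∨ 3 ≤ α.length := by
      rw [List.length_cons] at *
      omega
    · rw [hφ.length_three _ h hα₃, branchCount_eq_zero hα₃.le, Function.iterate_zero_apply]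
    · have hφα := ih (h.of_cons (by rintro rfl; simp at hα₃)) hα₃
      rw [branchCount]
      by_cases hi : IsFactor ((1 - i) :: α)
      · rw [if_pos ⟨hα₃, h.leftSpecial_iff.mpr hi⟩, Function.iterate_succ_apply', ← hφα,
          hφ.branching i α h hα₃ hi]
      · rw [if_neg (hi <| h.leftSpecial_iff.mp ·.2), add_zero, ← hφα, hφ.not_branching i α h hα₃ hi]

theorem phi_reverse_general {X : Type*} {c : X} {f : X → X} {φ : List ℕ → X}
    (hφ : BranchRecursion c f φ) :
    ∀ α : List ℕ, IsFactor α → 3 ≤ α.length → φ α = φ α.reverse := by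
  intro α h hα
  rw [hφ.eq_iterate_branchCount h hα, ← branchCount_reverse h,
    ← hφ.eq_iterate_branchCount (isFactor_reverse.mpr h) (by simpa using hα)]

open Classical in
/-- The function `φ` on factors of the two-sided Thue–Morse sequence (defined by recursion
on the length: `φ(α) = 1/6` for `|α| = 3`, `φ(iα) = φ(α)` if `(1-i)α` is not a factor, and
`φ(iα) = φ(α)/2` if `(1-i)α` is a factor) is invariant under reversal. -/
theorem phi_reverse (φ : List ℕ → ℝ)
    (hφ3 : ∀ α : List ℕ, IsFactor α → α.length = 3 → φ α = 1 / 6)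
    (hφ1 : ∀ (i : ℕ) (α : List ℕ), IsFactor (i :: α) → 3 ≤ α.length →
      ¬ IsFactor ((1 - i) :: α) → φ (i :: α) = φ α)
    (hφ2 : ∀ (i : ℕ) (α : List ℕ), IsFactor (i :: α) → 3 ≤ α.length →
      IsFactor ((1 - i) :: α) → φ (i :: α) = φ α / 2) :
    ∀ α : List ℕ, IsFactor α → 3 ≤ α.length → φ α = φ α.reverse :=
  phi_reverse_general (f := (· / 2)) ⟨hφ3, hφ1, hφ2⟩
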